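/- Let φ be a CNF formula with variables x_1,…,x_l and nonempty clauses c_1,…,c_m. Let G=(V,A,2) be the temporal graph with V = {x_1^p,…,x_l^p} ∪ {x_1^n,…,x_l^n} ∪ {y_1,…,y_l} ∪ {c_1,…,c_m} ∪ {r} and A consisting of: for each α∈{p,n} and i∈[l], the arcs (r,x_i^α,1,1), (r,x_i^α,2,2) and (x_i^α,y_i,1,1); the arc (x_i^p,c_j,1,1) for every clause c_j and variable x_i occurring positively in c_j; and the arc (x_i^n,c_j,1,1) for every clause c_j and variable x_i occurring negatively in c_j. Then φ is satisfiable if and only if there exists an LD-TOSS G'=(V,A',2) with root r of G such that |A'| ≤ 4l+m. -/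

import Mathlib

open scoped Classical

universe u

/-- A temporal arc `(u, v, s, t)`: tail `u`, head `v`, starting time `s`, arrival time `t`. -/
abbrev TArc (α : Type u) := α × α × ℕ × ℕ

/-- The tail vertex of a temporal arc. -/
def TArc.tail {α : Type u} (a : TArc α) : α := a.1

/-- The head vertex of a temporal arc. -/
def TArc.head {α : Type u} (a : TArc α) : α := a.2.1

/-- The starting time of a temporal arc. -/
def TArc.ts {α : Type u} (a : TArc α) : ℕ := a.2.2.1

/-- The arrival time of a temporal arc. -/
def TArc.ta {α : Type u} (a : TArc α) : ℕ := a.2.2.2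

/-- The elapsed time of a temporal arc. -/
def TArc.el {α : Type u} (a : TArc α) : ℕ := TArc.ta a - TArc.ts a

/-- A temporal graph `(V, A, τ)`. -/
structure TempGraph (α : Type u) where
  V : Finset α
  A : Finset (TArc α)
  τ : ℕ
  nonempty : V.Nonempty
  valid : ∀ a ∈ A, TArc.tail a ∈ V ∧ TArc.head a ∈ V ∧ TArc.tail a ≠ TArc.head a ∧
      1 ≤ TArc.ts a ∧ TArc.ts a ≤ TArc.ta a ∧ TArc.ta a ≤ τ

variable {α : Type u}

/-- `IsWalk S u v L` : `L` is the list of arcs of a temporal `(u,v)`-walk using arcs from `S`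
(the trivial walk, `L = []`, requires `u = v`). -/
def IsWalk (S : Finset (TArc α)) : α → α → List (TArc α) → Prop
  | u, v, [] => u = v
  | u, v, a :: L => a ∈ S ∧ TArc.tail a = u ∧ (∀ b ∈ L.head?, TArc.ta a ≤ TArc.ts b) ∧
      IsWalk S (TArc.head a) v L

/-- The starting time of a walk (`0` for the trivial walk). -/
def tsW (L : List (TArc α)) : ℕ := (L.map TArc.ts).headI

/-- The arrival time of a walk (`0` for the trivial walk). -/
def taW (L : List (TArc α)) : ℕ := (L.map TArc.ta).getLastD 0

/-- The duration of a walk. -/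
def durW (L : List (TArc α)) : ℕ := taW L - tsW L

/-- The travelling time of a walk. -/
def ttW (L : List (TArc α)) : ℕ := (L.map TArc.el).sum

/-- The waiting time of a walk. -/
def waitW (L : List (TArc α)) : ℕ :=
  (List.zipWith (fun a b => TArc.ts b - TArc.ta a) L L.tail).sum

/-- The final vertex of a walk starting at `u` with arc list `L`. -/
def endv (u : α) (L : List (TArc α)) : α := (L.map TArc.head).getLastD u

/-- The sequence of vertices of a walk starting at `u` with arc list `L`. -/
def verts (u : α) (L : List (TArc α)) : List α := u :: L.map TArc.head

/-- A walk is a (temporal) path when its vertices are pairwise distinct. -/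
def IsPathList (u : α) (L : List (TArc α)) : Prop := (verts u L).Nodup

/-- The six optimisation criteria: earliest arrival, fastest time, latest departure,
minimum transfers, minimum waiting time, shortest travelling time. -/
inductive DistKind : Type
  | EA | FT | LD | MT | MW | ST
  deriving DecidableEq

/-- The value of a walk for each criterion. -/
def wval : DistKind → List (TArc α) → ℕ
  | .EA, L => taW L
  | .FT, L => durW L
  | .LD, L => tsW L
  | .MT, L => L.length
  | .MW, L => waitW L
  | .ST, L => ttW L

/-- `Realizes d S u v L` : `L` is a temporal `(u,v)`-walk within `S` attaining the optimum
(minimum, or maximum for `LD`) of the criterion `d` among all temporal `(u,v)`-walks in `S`. -/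
def Realizes (d : DistKind) (S : Finset (TArc α)) (u v : α) (L : List (TArc α)) : Prop :=
  IsWalk S u v L ∧ ∀ L', IsWalk S u v L' →
    if d = DistKind.LD then wval d L' ≤ wval d L else wval d L ≤ wval d L'

/-- The distance value `d_G(u,v) ∈ ℕ∞` (`+∞` when `v` is not temporally reachable from `u`;
`LD_G(u,u) = τ + 1`). -/
noncomputable def distVal (d : DistKind) (G : TempGraph α) (u v : α) : ℕ∞ :=
  if d = DistKind.LD then
    (if u = v then ((G.τ : ℕ∞) + 1)
     else if ∃ L, IsWalk G.A u v L then
       sSup {n : ℕ∞ | ∃ L, IsWalk G.A u v L ∧ n = (tsW L : ℕ∞)}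
     else ⊤)
  else sInf {n : ℕ∞ | ∃ L, IsWalk G.A u v L ∧ n = (wval d L : ℕ∞)}

/-- Every vertex of `Vs` is temporally reachable from `r` using arcs from `S`. -/
def ReachAll (S : Finset (TArc α)) (Vs : Finset α) (r : α) : Prop :=
  ∀ v ∈ Vs, ∃ L, IsWalk S r v L

/-- `B` is a temporal out-branching (TOB) with root `r`: its arc set is a minimal set of
temporal arcs such that every vertex of `B` is temporally reachable from `r`. -/
def IsTOB (B : TempGraph α) (r : α) : Prop :=
  r ∈ B.V ∧ ReachAll B.A B.V r ∧ ∀ S ⊂ B.A, ¬ ReachAll S B.V r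

/-- `B` is a temporal subgraph of `G`. -/
def IsSubgraph (B G : TempGraph α) : Prop :=
  B.V ⊆ G.V ∧ B.A ⊆ G.A ∧ B.τ ≤ G.τ

/-- `B` is a `d`-TOB of `G` rooted at `r`. -/
def IsDTOB (d : DistKind) (G B : TempGraph α) (r : α) : Prop :=
  IsTOB B r ∧ IsSubgraph B G ∧ ∀ v ∈ B.V, distVal d B r v = distVal d G r v

/-- `B` is a spanning `d`-TOB of `G` rooted at `r`. -/
def IsSpanningDTOB (d : DistKind) (G B : TempGraph α) (r : α) : Prop :=
  IsDTOB d G B r ∧ B.V = G.V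

/-- `B` is a maximum `d`-TOB of `G` rooted at `r`. -/
def IsMaxDTOB (d : DistKind) (G B : TempGraph α) (r : α) : Prop :=
  IsDTOB d G B r ∧ ∀ B', IsDTOB d G B' r → B'.V.card ≤ B.V.card

/-- The in-degree of `v` with respect to the arc set `S`. -/
noncomputable def inDeg (S : Finset (TArc α)) (v : α) : ℕ :=
  (S.filter fun a => TArc.head a = v).card

/-- A walk in a (static) digraph with arc set `E`. -/
def IsDWalk (E : Finset (α × α)) : α → α → List (α × α) → Prop
  | u, v, [] => u = v
  | u, v, e :: L => e ∈ E ∧ e.1 = u ∧ IsDWalk E e.2 v L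

/-- The digraph `(Vs, E)` is an out-branching with root `r`: every `v ∈ Vs` is the end of
a unique `(r,v)`-walk. -/
def IsOutBranching (Vs : Finset α) (E : Finset (α × α)) (r : α) : Prop :=
  ∀ v ∈ Vs, ∃! L, IsDWalk E r v L

/-- The arc of the underlying multidigraph corresponding to a temporal arc. -/
def proj (a : TArc α) : α × α := (TArc.tail a, TArc.head a)

/-- The temporal subgraph of `G` induced by a set of vertices `Z`. -/
noncomputable def induced (G : TempGraph α) (Z : Finset α) (hne : Z.Nonempty) (hZ : Z ⊆ G.V) :
    TempGraph α where
  V := Z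
  A := G.A.filter fun a => TArc.tail a ∈ Z ∧ TArc.head a ∈ Z
  τ := G.τ
  nonempty := hne
  valid := by
    intro a ha
    simp only [Finset.mem_filter] at ha
    obtain ⟨haA, h1, h2⟩ := ha
    obtain ⟨-, -, h3, h4, h5, h6⟩ := G.valid a haA
    exact ⟨h1, h2, h3, h4, h5, h6⟩

/-- The reverse of a temporal arc with respect to lifetime `τ`. -/
def TArc.rev (τ : ℕ) (a : TArc α) : TArc α :=
  (TArc.head a, TArc.tail a, τ + 1 - TArc.ta a, τ + 1 - TArc.ts a)

/-- The reverse of a temporal graph. -/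
noncomputable def TempGraph.rev (G : TempGraph α) : TempGraph α where
  V := G.V
  A := G.A.image (TArc.rev G.τ)
  τ := G.τ
  nonempty := G.nonempty
  valid := by
    intro b hb
    simp only [Finset.mem_image] at hb
    obtain ⟨a, ha, rfl⟩ := hb
    obtain ⟨h1, h2, h3, h4, h5, h6⟩ := G.valid a ha
    refine ⟨h2, h1, Ne.symm h3, ?_, ?_, ?_⟩ <;>
      simp only [TArc.rev, TArc.tail, TArc.head, TArc.ts, TArc.ta] at * <;> omega

/-- The reverse of a temporal walk. -/
def revWalk (τ : ℕ) (L : List (TArc α)) : List (TArc α) := (L.map (TArc.rev τ)).reverse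

/-- Every vertex of `Vs` temporally reaches `r` using arcs from `S`. -/
def CoReachAll (S : Finset (TArc α)) (Vs : Finset α) (r : α) : Prop :=
  ∀ v ∈ Vs, ∃ L, IsWalk S v r L

/-- `B` is a temporal in-branching (TIB) with root `r`. -/
def IsTIB (B : TempGraph α) (r : α) : Prop :=
  r ∈ B.V ∧ CoReachAll B.A B.V r ∧ ∀ S ⊂ B.A, ¬ CoReachAll S B.V r

/-- `B` is a `d`-TIB of `G` rooted at `r`. -/
def IsDTIB (d : DistKind) (G B : TempGraph α) (r : α) : Prop :=
  IsTIB B r ∧ IsSubgraph B G ∧ ∀ v ∈ B.V, distVal d B v r = distVal d G v r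

/-- `B` is a maximum `d`-TIB of `G` rooted at `r`. -/
def IsMaxDTIB (d : DistKind) (G B : TempGraph α) (r : α) : Prop :=
  IsDTIB d G B r ∧ ∀ B', IsDTIB d G B' r → B'.V.card ≤ B.V.card

/-- The reverse of a temporal subgraph, with respect to the ambient lifetime `τ`. -/
noncomputable def revSub (τ : ℕ) (B : TempGraph α) (h : B.τ ≤ τ) : TempGraph α where
  V := B.V
  A := B.A.image (TArc.rev τ)
  τ := τ
  nonempty := B.nonempty
  valid := by
    intro b hb
    simp only [Finset.mem_image] at hb
    obtain ⟨a, ha, rfl⟩ := hb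
    obtain ⟨h1, h2, h3, h4, h5, h6⟩ := B.valid a ha
    refine ⟨h2, h1, Ne.symm h3, ?_, ?_, ?_⟩ <;>
      simp only [TArc.rev, TArc.tail, TArc.head, TArc.ts, TArc.ta] at * <;> omega

/-- `L` (a walk from `u`) is `d`-prefix-optimal: every prefix of it realizes the distance `d`
from `u` to the end vertex of the prefix. -/
def PrefixOptimal (d : DistKind) (S : Finset (TArc α)) (u : α) (L : List (TArc α)) : Prop :=
  ∀ h ≤ L.length, Realizes d S u (endv u (L.take h)) (L.take h)

/-- `EAd_G(u,v)`: the minimum arrival time among the walks realizing `d_G(u,v)`. -/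
noncomputable def eaVal (d : DistKind) (G : TempGraph α) (u v : α) : ℕ∞ :=
  sInf {n : ℕ∞ | ∃ L, Realizes d G.A u v L ∧ n = (taW L : ℕ∞)}

/-- `G'` is a `d`-temporal out-spanning subgraph (d-TOSS) with root `r` of `G`. -/
def IsDTOSS (d : DistKind) (G G' : TempGraph α) (r : α) : Prop :=
  IsSubgraph G' G ∧ G'.V = G.V ∧
    ∀ v ∈ G.V, ∃ L, IsWalk G'.A r v L ∧ Realizes d G.A r v L

/-- Satisfiability of a CNF formula given by the positive/negative occurrence sets
of its clauses. -/
def Satisfiable (n m : ℕ) (pos neg : Fin m → Finset (Fin n)) : Prop :=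
  ∃ σ : Fin n → Bool, ∀ j : Fin m, (∃ i ∈ pos j, σ i = true) ∨ ∃ i ∈ neg j, σ i = false

/-- Vertex set of the reduction: `x_i^p`, `x_i^n`, `y_i`, clauses `c_j`, and the root `r`. -/
abbrev V18 (l m : ℕ) := Sum (Fin l) (Sum (Fin l) (Sum (Fin l) (Sum (Fin m) Unit)))

def xp18 (l m : ℕ) (i : Fin l) : V18 l m := Sum.inl i
def xn18 (l m : ℕ) (i : Fin l) : V18 l m := Sum.inr (Sum.inl i)
def y18 (l m : ℕ) (i : Fin l) : V18 l m := Sum.inr (Sum.inr (Sum.inl i))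
def c18 (l m : ℕ) (j : Fin m) : V18 l m := Sum.inr (Sum.inr (Sum.inr (Sum.inl j)))
def rt18 (l m : ℕ) : V18 l m := Sum.inr (Sum.inr (Sum.inr (Sum.inr ())))

/-- The temporal graph of the reduction of Theorem `thm:LD_min_hard` (elapsed time 0 case):
for each `α ∈ {p,n}` and `i`, the arcs `(r,x_i^α,1,1)`, `(r,x_i^α,2,2)`, `(x_i^α,y_i,1,1)`;
the arc `(x_i^p,c_j,1,1)` when `x_i` occurs positively in `c_j`, and `(x_i^n,c_j,1,1)` when
`x_i` occurs negatively in `c_j`; the lifetime is 2. -/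
noncomputable def G18 (l m : ℕ) (pos neg : Fin m → Finset (Fin l)) :
    TempGraph (V18 l m) where
  V := Finset.univ
  A :=
    (Finset.univ.image fun i : Fin l => ((rt18 l m, xp18 l m i, 1, 1) : TArc (V18 l m)))
    ∪ (Finset.univ.image fun i : Fin l => ((rt18 l m, xn18 l m i, 1, 1) : TArc (V18 l m)))
    ∪ (Finset.univ.image fun i : Fin l => ((rt18 l m, xp18 l m i, 2, 2) : TArc (V18 l m)))
    ∪ (Finset.univ.image fun i : Fin l => ((rt18 l m, xn18 l m i, 2, 2) : TArc (V18 l m)))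
    ∪ (Finset.univ.image fun i : Fin l => ((xp18 l m i, y18 l m i, 1, 1) : TArc (V18 l m)))
    ∪ (Finset.univ.image fun i : Fin l => ((xn18 l m i, y18 l m i, 1, 1) : TArc (V18 l m)))
    ∪ (Finset.univ.biUnion fun j : Fin m =>
        ((pos j).image fun i => ((xp18 l m i, c18 l m j, 1, 1) : TArc (V18 l m)))
        ∪ ((neg j).image fun i => ((xn18 l m i, c18 l m j, 1, 1) : TArc (V18 l m))))
  τ := 2
  nonempty := ⟨rt18 l m, Finset.mem_univ _⟩
  valid := by
    intro a ha
    simp only [Finset.mem_union, Finset.mem_image, Finset.mem_biUnion, Finset.mem_univ,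
      true_and] at ha
    rcases ha with ((((((⟨i, rfl⟩ | ⟨i, rfl⟩) | ⟨i, rfl⟩) | ⟨i, rfl⟩) | ⟨i, rfl⟩)
        | ⟨i, rfl⟩) | ⟨j, (⟨i, -, rfl⟩ | ⟨i, -, rfl⟩)⟩) <;>
      exact ⟨Finset.mem_univ _, Finset.mem_univ _,
        by simp [TArc.tail, TArc.head, xp18, xn18, y18, c18, rt18],
        by norm_num [TArc.ts], by norm_num [TArc.ts, TArc.ta], by norm_num [TArc.ta]⟩

/-!
Every arc of the reduction graph leads from the root to a literal vertex or from a literal vertex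
to a vertex `y_i` or `c_j`, so walks from the root have length at most two. Latest departure
forces all `2l` root arcs at time `2`; these are too late to be continued. Hence each `y_i` costs
a further root arc at time `1` and an arc into `y_i`, and each `c_j` costs an arc into `c_j`. This
already accounts for `4l + m` arcs, so when no more are allowed the literals entered at time `1`
are exactly one per variable, i.e. an assignment, and every clause is reached through one of them.
-/

section TemporalGraph

variable {S T : Finset (TArc α)} {u v : α} {L : List (TArc α)}

theorem isWalk_singleton {a : TArc α} :
    IsWalk S u v [a] ↔ a ∈ S ∧ TArc.tail a = u ∧ TArc.head a = v := by
  simp [IsWalk]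

theorem isWalk_pair {a b : TArc α} :
    IsWalk S u v [a, b] ↔ a ∈ S ∧ TArc.tail a = u ∧ TArc.ta a ≤ TArc.ts b ∧
      b ∈ S ∧ TArc.tail b = TArc.head a ∧ TArc.head b = v := by
  simp [IsWalk]

theorem IsWalk.mono (hST : S ⊆ T) (h : IsWalk S u v L) : IsWalk T u v L := by
  induction L generalizing u with
  | nil => exact h
  | cons a L ih => exact ⟨hST h.1, h.2.1, h.2.2.1, ih h.2.2.2⟩

theorem IsWalk.rank_add_length {ρ : α → ℕ}
    (hρ : ∀ a ∈ S, ρ (TArc.head a) = ρ (TArc.tail a) + 1) (h : IsWalk S u v L) :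
    ρ u + L.length = ρ v := by
  induction L generalizing u with
  | nil => exact congrArg ρ h
  | cons a L ih =>
    obtain ⟨ha, rfl, -, hL⟩ := h
    rw [← ih hL, hρ a ha, List.length_cons]
    omega

theorem realizes_LD_iff :
    Realizes DistKind.LD S u v L ↔
      IsWalk S u v L ∧ ∀ L', IsWalk S u v L' → tsW L' ≤ tsW L := by
  simp [Realizes, wval]

/-- The spanning temporal subgraph of `G` with arc set `S`, on all vertices of `G` and with the
same lifetime. -/
def TempGraph.restrictArcs (G : TempGraph α) (S : Finset (TArc α)) (hS : S ⊆ G.A) :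
    TempGraph α where
  V := G.V
  A := S
  τ := G.τ
  nonempty := G.nonempty
  valid a ha := G.valid a (hS ha)

theorem TempGraph.isSubgraph_restrictArcs (G : TempGraph α) (hS : S ⊆ G.A) :
    IsSubgraph (G.restrictArcs S hS) G :=
  ⟨subset_rfl, hS, le_rfl⟩

end TemporalGraph

namespace G18

/-- Literals over `l` variables: `(i, true)` is `x_i` and `(i, false)` is its negation. -/
abbrev Literal (l : ℕ) := Fin l × Bool

variable {l m : ℕ} {pos neg : Fin m → Finset (Fin l)}

/-- The literal `p` occurs in the clause `c_j`. -/
def Occurs (pos neg : Fin m → Finset (Fin l)) (j : Fin m) : Literal l → Prop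
  | (i, true) => i ∈ pos j
  | (i, false) => i ∈ neg j

theorem satisfiable_iff_exists_occurs :
    Satisfiable l m pos neg ↔ ∃ σ : Fin l → Bool, ∀ j, ∃ i, Occurs pos neg j (i, σ i) := by
  refine exists_congr fun σ ↦ forall_congr' fun j ↦ ?_
  rw [← exists_or]
  refine exists_congr fun i ↦ ?_
  cases h : σ i <;> simp [Occurs]

/-- The vertex of a literal: `x_i^p` for `(i, true)` and `x_i^n` for `(i, false)`. -/
def litVertex : Literal l → V18 l m
  | (i, true) => xp18 l m i
  | (i, false) => xn18 l m i

/-- The grading of the reduction graph, which every arc raises by one: the root has level `0`, the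
literal vertices have level `1`, the vertices `y_i` and `c_j` have level `2`. -/
def level : V18 l m → ℕ
  | .inl _ | .inr (.inl _) => 1
  | .inr (.inr (.inl _)) | .inr (.inr (.inr (.inl _))) => 2
  | .inr (.inr (.inr (.inr _))) => 0

@[simp] theorem level_rt18 : level (rt18 l m) = 0 := rfl

@[simp] theorem level_litVertex (p : Literal l) : level (litVertex (m := m) p) = 1 := by
  rcases p with ⟨i, _ | _⟩ <;> rfl

@[simp] theorem level_y18 (i : Fin l) : level (y18 l m i) = 2 := rfl

@[simp] theorem level_c18 (j : Fin m) : level (c18 l m j) = 2 := rfl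

theorem litVertex_injective : Function.Injective (litVertex : Literal l → V18 l m) := by
  rintro ⟨i, _ | _⟩ ⟨i', _ | _⟩ h <;> simp_all [litVertex, xp18, xn18]

@[simp] theorem litVertex_inj {p q : Literal l} :
    (litVertex p : V18 l m) = litVertex q ↔ p = q :=
  litVertex_injective.eq_iff

@[simp] theorem y18_inj {i i' : Fin l} : y18 l m i = y18 l m i' ↔ i = i' := by simp [y18]

@[simp] theorem c18_inj {j j' : Fin m} : c18 l m j = c18 l m j' ↔ j = j' := by simp [c18]

@[simp] theorem y18_ne_c18 (i : Fin l) (j : Fin m) : y18 l m i ≠ c18 l m j := by simp [y18, c18]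

@[simp] theorem c18_ne_y18 (j : Fin m) (i : Fin l) : c18 l m j ≠ y18 l m i :=
  (y18_ne_c18 i j).symm

@[simp] theorem litVertex_ne_rt18 (p : Literal l) : litVertex p ≠ rt18 l m :=
  ne_of_apply_ne level (by simp)

theorem forall_vertex {P : V18 l m → Prop} :
    (∀ v, P v) ↔
      P (rt18 l m) ∧ (∀ p, P (litVertex p)) ∧ (∀ i, P (y18 l m i)) ∧ ∀ j, P (c18 l m j) := by
  refine ⟨fun h ↦ ⟨h _, fun _ ↦ h _, fun _ ↦ h _, fun _ ↦ h _⟩, ?_⟩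
  rintro ⟨hr, hx, hy, hc⟩ (i | i | i | j | _)
  exacts [hx (i, true), hx (i, false), hy i, hc j, hr]

/-- The arc `(r, p, t, t)` from the root into the literal `p`. -/
def entryArc (p : Literal l) (t : ℕ) : TArc (V18 l m) := (rt18 l m, litVertex p, t, t)

/-- The arc `(p, v, 1, 1)` out of the literal `p`. -/
def exitArc (p : Literal l) (v : V18 l m) : TArc (V18 l m) := (litVertex p, v, 1, 1)

@[simp] theorem entryArc_inj {p q : Literal l} {s t : ℕ} :
    (entryArc p s : TArc (V18 l m)) = entryArc q t ↔ p = q ∧ s = t := by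
  simp [entryArc]

@[simp] theorem exitArc_inj {p q : Literal l} {v w : V18 l m} :
    exitArc p v = exitArc q w ↔ p = q ∧ v = w := by
  simp [exitArc]

@[simp] theorem exitArc_ne_entryArc (p q : Literal l) (v : V18 l m) (t : ℕ) :
    exitArc p v ≠ entryArc q t := by
  simp [entryArc, exitArc]

@[simp] theorem entryArc_ne_exitArc (p q : Literal l) (t : ℕ) (v : V18 l m) :
    entryArc p t ≠ exitArc q v :=
  (exitArc_ne_entryArc q p v t).symm

theorem mem_A {a : TArc (V18 l m)} :
    a ∈ (G18 l m pos neg).A ↔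
      (∃ p, a = entryArc p 1) ∨ (∃ p, a = entryArc p 2) ∨
        (∃ p, a = exitArc p (y18 l m p.1)) ∨
          ∃ j p, Occurs pos neg j p ∧ a = exitArc p (c18 l m j) := by
  simp only [G18, Finset.mem_union, Finset.mem_image, Finset.mem_biUnion, Finset.mem_univ,
    true_and, Prod.exists, Bool.exists_bool, litVertex, entryArc, exitArc, Occurs, exists_or,
    eq_comm (a := a)]
  ac_nf

theorem entryArc_mem_A {p : Literal l} {t : ℕ} :
    entryArc p t ∈ (G18 l m pos neg).A ↔ t = 1 ∨ t = 2 := by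
  simp [mem_A]

theorem exitArc_y18_mem_A {p : Literal l} {i : Fin l} :
    exitArc p (y18 l m i) ∈ (G18 l m pos neg).A ↔ p.1 = i := by
  simp [mem_A, eq_comm, -Prod.exists]

theorem exitArc_c18_mem_A {p : Literal l} {j : Fin m} :
    exitArc p (c18 l m j) ∈ (G18 l m pos neg).A ↔ Occurs pos neg j p := by
  simp [mem_A, -Prod.exists]

theorem level_head_eq_level_tail_add_one {a : TArc (V18 l m)} (ha : a ∈ (G18 l m pos neg).A) :
    level (TArc.head a) = level (TArc.tail a) + 1 := by
  rcases mem_A.1 ha with ⟨p, rfl⟩ | ⟨p, rfl⟩ | ⟨p, rfl⟩ | ⟨j, p, -, rfl⟩ <;>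
    simp [entryArc, exitArc, TArc.head, TArc.tail]

theorem eq_entryArc_or_eq_exitArc {a : TArc (V18 l m)} (ha : a ∈ (G18 l m pos neg).A) :
    (∃ p t, a = entryArc p t) ∨ ∃ p v, a = exitArc p v := by
  rcases mem_A.1 ha with ⟨p, h⟩ | ⟨p, h⟩ | ⟨p, h⟩ | ⟨j, p, -, h⟩
  exacts [.inl ⟨_, _, h⟩, .inl ⟨_, _, h⟩, .inr ⟨_, _, h⟩, .inr ⟨_, _, h⟩]

theorem eq_entryArc_of_tail_eq_rt18 {a : TArc (V18 l m)} (ha : a ∈ (G18 l m pos neg).A)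
    (htail : TArc.tail a = rt18 l m) : ∃ p t, a = entryArc p t := by
  refine (eq_entryArc_or_eq_exitArc ha).resolve_right ?_
  rintro ⟨p, v, rfl⟩
  exact litVertex_ne_rt18 p htail

theorem eq_exitArc_of_tail_eq_litVertex {a : TArc (V18 l m)} {p : Literal l}
    (ha : a ∈ (G18 l m pos neg).A) (htail : TArc.tail a = litVertex p) :
    a = exitArc p (TArc.head a) := by
  rcases eq_entryArc_or_eq_exitArc ha with ⟨q, t, rfl⟩ | ⟨q, v, rfl⟩
  · exact absurd htail.symm (litVertex_ne_rt18 p)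
  · obtain rfl := litVertex_injective htail
    rfl

section Walks

variable {S : Finset (TArc (V18 l m))} {L : List (TArc (V18 l m))} {v : V18 l m}

theorem length_eq_level_of_isWalk (hS : S ⊆ (G18 l m pos neg).A)
    (hL : IsWalk S (rt18 l m) v L) : L.length = level v := by
  simpa using hL.rank_add_length fun a ha ↦ level_head_eq_level_tail_add_one (hS ha)

theorem isWalk_litVertex_iff (hS : S ⊆ (G18 l m pos neg).A) {p : Literal l} :
    IsWalk S (rt18 l m) (litVertex p) L ↔ ∃ t, entryArc p t ∈ S ∧ L = [entryArc p t] := by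
  constructor
  · intro hL
    have hlen : L.length = 1 := by simpa using length_eq_level_of_isWalk hS hL
    obtain ⟨a, rfl⟩ := List.length_eq_one_iff.1 hlen
    obtain ⟨ha, htail, hhead⟩ := isWalk_singleton.1 hL
    obtain ⟨q, t, rfl⟩ := eq_entryArc_of_tail_eq_rt18 (hS ha) htail
    obtain rfl := litVertex_injective hhead
    exact ⟨t, ha, rfl⟩
  · rintro ⟨t, ht, rfl⟩
    exact isWalk_singleton.2 ⟨ht, rfl, rfl⟩

theorem isWalk_iff_of_level_eq_two (hS : S ⊆ (G18 l m pos neg).A) (hv : level v = 2) :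
    IsWalk S (rt18 l m) v L ↔
      ∃ p, entryArc p 1 ∈ S ∧ exitArc p v ∈ S ∧ L = [entryArc p 1, exitArc p v] := by
  constructor
  · intro hL
    have hlen : L.length = 2 := (length_eq_level_of_isWalk hS hL).trans hv
    obtain ⟨a, b, rfl⟩ := List.length_eq_two.1 hlen
    obtain ⟨ha, htail, htime, hb, hjoin, rfl⟩ := isWalk_pair.1 hL
    obtain ⟨p, t, rfl⟩ := eq_entryArc_of_tail_eq_rt18 (hS ha) htail
    have hb_exit := eq_exitArc_of_tail_eq_litVertex (hS hb) hjoin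
    have ht : t ≤ 1 := by rwa [hb_exit] at htime
    obtain rfl : t = 1 := by
      have := entryArc_mem_A.1 (hS ha)
      omega
    exact ⟨p, ha, hb_exit ▸ hb, by rw [← hb_exit]⟩
  · rintro ⟨p, hentry, hexit, rfl⟩
    exact isWalk_pair.2 ⟨hentry, rfl, le_rfl, hexit, rfl, rfl⟩

theorem exists_realizes_rt18 :
    ∃ L, IsWalk S (rt18 l m) (rt18 l m) L ∧
      Realizes DistKind.LD (G18 l m pos neg).A (rt18 l m) (rt18 l m) L := by
  refine ⟨[], rfl, realizes_LD_iff.2 ⟨rfl, fun L' hL' ↦ ?_⟩⟩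
  rw [List.length_eq_zero_iff.1 (length_eq_level_of_isWalk subset_rfl hL')]

theorem exists_realizes_litVertex_iff (hS : S ⊆ (G18 l m pos neg).A) {p : Literal l} :
    (∃ L, IsWalk S (rt18 l m) (litVertex p) L ∧
      Realizes DistKind.LD (G18 l m pos neg).A (rt18 l m) (litVertex p) L) ↔
        entryArc p 2 ∈ S := by
  simp only [realizes_LD_iff]
  constructor
  · rintro ⟨L, hL, -, hmax⟩
    obtain ⟨t, ht, rfl⟩ := (isWalk_litVertex_iff hS).1 hL
    have hlate : 2 ≤ t :=
      hmax _ ((isWalk_litVertex_iff subset_rfl).2 ⟨2, entryArc_mem_A.2 (.inr rfl), rfl⟩)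
    obtain rfl : t = 2 := by
      have := entryArc_mem_A.1 (hS ht)
      omega
    exact ht
  · intro hp
    have hwalk := (isWalk_litVertex_iff hS).2 ⟨2, hp, rfl⟩
    refine ⟨_, hwalk, hwalk.mono hS, fun L' hL' ↦ ?_⟩
    obtain ⟨t, ht, rfl⟩ := (isWalk_litVertex_iff subset_rfl).1 hL'
    have : t ≤ 2 := by
      have := entryArc_mem_A.1 ht
      omega
    exact this

theorem exists_realizes_iff_of_level_eq_two (hS : S ⊆ (G18 l m pos neg).A) (hv : level v = 2) :
    (∃ L, IsWalk S (rt18 l m) v L ∧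
      Realizes DistKind.LD (G18 l m pos neg).A (rt18 l m) v L) ↔
        ∃ p, entryArc p 1 ∈ S ∧ exitArc p v ∈ S := by
  simp only [realizes_LD_iff]
  constructor
  · rintro ⟨L, hL, -⟩
    obtain ⟨p, hentry, hexit, -⟩ := (isWalk_iff_of_level_eq_two hS hv).1 hL
    exact ⟨p, hentry, hexit⟩
  · rintro ⟨p, hentry, hexit⟩
    have hwalk := (isWalk_iff_of_level_eq_two hS hv).2 ⟨p, hentry, hexit, rfl⟩
    refine ⟨_, hwalk, hwalk.mono hS, fun L' hL' ↦ ?_⟩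
    obtain ⟨q, -, -, rfl⟩ := (isWalk_iff_of_level_eq_two subset_rfl hv).1 hL'
    exact le_rfl

end Walks

theorem isDTOSS_iff {G' : TempGraph (V18 l m)} :
    IsDTOSS DistKind.LD (G18 l m pos neg) G' (rt18 l m) ↔
      IsSubgraph G' (G18 l m pos neg) ∧ G'.V = (G18 l m pos neg).V ∧
        (∀ p, entryArc p 2 ∈ G'.A) ∧
        (∀ i, ∃ b, entryArc (i, b) 1 ∈ G'.A ∧ exitArc (i, b) (y18 l m i) ∈ G'.A) ∧
        ∀ j, ∃ p, entryArc p 1 ∈ G'.A ∧ exitArc p (c18 l m j) ∈ G'.A := by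
  refine and_congr_right fun hsub ↦ and_congr_right fun _ ↦ ?_
  have hvar (i : Fin l) :
      (∃ p, entryArc p 1 ∈ G'.A ∧ exitArc p (y18 l m i) ∈ G'.A) ↔
        ∃ b, entryArc (i, b) 1 ∈ G'.A ∧ exitArc (i, b) (y18 l m i) ∈ G'.A := by
    refine ⟨?_, fun ⟨b, h⟩ ↦ ⟨(i, b), h⟩⟩
    rintro ⟨⟨k, b⟩, hentry, hexit⟩
    obtain rfl : k = i := exitArc_y18_mem_A.1 (hsub.2.1 hexit)
    exact ⟨b, hentry, hexit⟩
  simp only [show (G18 l m pos neg).V = Finset.univ from rfl, Finset.mem_univ, true_imp_iff,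
    forall_vertex, exists_realizes_rt18, true_and, exists_realizes_litVertex_iff hsub.2.1,
    exists_realizes_iff_of_level_eq_two hsub.2.1 (level_y18 _),
    exists_realizes_iff_of_level_eq_two hsub.2.1 (level_c18 _), hvar]

section Selection

variable {f : Fin l → Bool} {g : Fin m → Literal l}

/-- The arcs of `selectedArcs f g`; the four summands index the root arcs at time `2`, the root arcs
at time `1`, the arcs into the `y_i` and the arcs into the `c_j`. -/
def selectedArc (f : Fin l → Bool) (g : Fin m → Literal l) :
    Literal l ⊕ Fin l ⊕ Fin l ⊕ Fin m → TArc (V18 l m)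
  | .inl p => entryArc p 2
  | .inr (.inl i) => entryArc (i, f i) 1
  | .inr (.inr (.inl i)) => exitArc (i, f i) (y18 l m i)
  | .inr (.inr (.inr j)) => exitArc (g j) (c18 l m j)

theorem selectedArc_injective (f : Fin l → Bool) (g : Fin m → Literal l) :
    Function.Injective (selectedArc f g) := by
  rintro (p | i | i | j) (p' | i' | i' | j') <;>
    simp +contextual [selectedArc]

/-- The candidate LD-TOSS given by an assignment `f` and a choice `g` of a literal for each clause:
`y_i` is entered from the literal `(i, f i)`, the clause `c_j` from the literal `g j`. -/
noncomputable def selectedArcs (f : Fin l → Bool) (g : Fin m → Literal l) :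
    Finset (TArc (V18 l m)) :=
  Finset.univ.image (selectedArc f g)

theorem card_selectedArcs (f : Fin l → Bool) (g : Fin m → Literal l) :
    (selectedArcs f g).card = 4 * l + m := by
  rw [selectedArcs, Finset.card_image_of_injective _ (selectedArc_injective f g)]
  simp only [Finset.card_univ, Fintype.card_sum, Fintype.card_prod, Fintype.card_bool,
    Fintype.card_fin]
  ring

theorem selectedArcs_subset_iff {S : Finset (TArc (V18 l m))} :
    selectedArcs f g ⊆ S ↔
      (∀ p, entryArc p 2 ∈ S) ∧ (∀ i, entryArc (i, f i) 1 ∈ S) ∧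
        (∀ i, exitArc (i, f i) (y18 l m i) ∈ S) ∧ ∀ j, exitArc (g j) (c18 l m j) ∈ S := by
  simp only [selectedArcs, Finset.image_subset_iff, Finset.mem_univ, true_imp_iff, Sum.forall,
    selectedArc]

theorem entryArc_one_mem_selectedArcs {p : Literal l} :
    entryArc p 1 ∈ selectedArcs f g ↔ f p.1 = p.2 := by
  rcases p with ⟨i, b⟩
  simp [selectedArcs, selectedArc]

theorem selectedArcs_subset_A (hg : ∀ j, Occurs pos neg j (g j)) :
    selectedArcs f g ⊆ (G18 l m pos neg).A :=
  selectedArcs_subset_iff.2 ⟨fun _ ↦ entryArc_mem_A.2 (.inr rfl),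
    fun _ ↦ entryArc_mem_A.2 (.inl rfl), fun _ ↦ exitArc_y18_mem_A.2 rfl,
    fun j ↦ exitArc_c18_mem_A.2 (hg j)⟩

theorem isDTOSS_restrictArcs_selectedArcs (hg : ∀ j, Occurs pos neg j (g j))
    (hfg : ∀ j, f (g j).1 = (g j).2) :
    IsDTOSS DistKind.LD (G18 l m pos neg)
      ((G18 l m pos neg).restrictArcs (selectedArcs f g) (selectedArcs_subset_A hg))
      (rt18 l m) := by
  obtain ⟨hlate, hearly, hy, hc⟩ := selectedArcs_subset_iff.1 (subset_refl (selectedArcs f g))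
  exact isDTOSS_iff.2 ⟨TempGraph.isSubgraph_restrictArcs _ _, rfl, hlate,
    fun i ↦ ⟨f i, hearly i, hy i⟩,
    fun j ↦ ⟨g j, entryArc_one_mem_selectedArcs.2 (hfg j), hc j⟩⟩

end Selection

theorem exists_selectedArcs_subset {G' : TempGraph (V18 l m)}
    (h : IsDTOSS DistKind.LD (G18 l m pos neg) G' (rt18 l m)) :
    ∃ (f : Fin l → Bool) (g : Fin m → Literal l), selectedArcs f g ⊆ G'.A ∧
      ∀ j, Occurs pos neg j (g j) ∧ entryArc (g j) 1 ∈ G'.A := by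
  obtain ⟨hsub, -, hlate, hvar, hclause⟩ := isDTOSS_iff.1 h
  choose f hf_entry hf_exit using hvar
  choose g hg_entry hg_exit using hclause
  exact ⟨f, g, selectedArcs_subset_iff.2 ⟨hlate, hf_entry, hf_exit, hg_exit⟩,
    fun j ↦ ⟨exitArc_c18_mem_A.1 (hsub.2.1 (hg_exit j)), hg_entry j⟩⟩

end G18

/-- Theorem `thm:LD_min_hard`, elapsed time 0 case: the CNF formula is
satisfiable iff the reduction graph has an LD-TOSS `G' = (V, A', 2)` with root `r` such that
`|A'| ≤ 4l + m`. -/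
theorem stmt_18 (l m : ℕ) (pos neg : Fin m → Finset (Fin l))
    (hne : ∀ j, (pos j ∪ neg j).Nonempty) :
    Satisfiable l m pos neg ↔
      ∃ G' : TempGraph (V18 l m),
        IsDTOSS DistKind.LD (G18 l m pos neg) G' (rt18 l m) ∧ G'.τ = 2 ∧
          G'.A.card ≤ 4 * l + m := by
  open G18 in
  rw [satisfiable_iff_exists_occurs]
  constructor
  · rintro ⟨σ, hσ⟩
    choose w hw using hσ
    exact ⟨_, isDTOSS_restrictArcs_selectedArcs hw fun _ ↦ rfl, rfl, (card_selectedArcs _ _).le⟩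
  · rintro ⟨G', hG', -, hcard⟩
    obtain ⟨σ, g, hsub, hg⟩ := exists_selectedArcs_subset hG'
    have hall : selectedArcs σ g = G'.A :=
      Finset.eq_of_subset_of_card_le hsub (hcard.trans_eq (card_selectedArcs σ g).symm)
    refine ⟨σ, fun j ↦ ⟨(g j).1, ?_⟩⟩
    obtain ⟨hocc, hentry⟩ := hg j
    have htrue : σ (g j).1 = (g j).2 := entryArc_one_mem_selectedArcs.1 (hall ▸ hentry)
    rwa [htrue]
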